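/- arXiv:2303.10744 — 2 statements merged into one kernel-verified Lean document; each statement's English description precedes it below -/
import Mathlib

section
/- Let E be a directed graph with E^0 finite and K a non-absolute field. If the Leavitt path algebra L_K(E) is non-commutative, then the unit group L_K(E)^× contains a non-cyclic free subgroup. -/
/-!
If `K` is not absolute, some `t : K` is not integral over `ℤ`, and hence lies outside a valuation
ring of `K`. With the resulting valuation, two explicit diagonalizable maps of the plane `K × K`
with eigenvalues `t, 1` and four distinct eigenlines generate a free group of rank two by ping-pong
(`freePair_plane`). This works in every characteristic.

The same free group lives in the units of any `K`-algebra that contains nonzero `x, y` with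
`x² = y² = 0`, `x y x = x`, `y x y = y`, since `xy, x, y, yx` then form a set of `2 × 2` matrix
units (`exists_freePair_of_matrixUnits`).

Such a pair exists in `L_K(E)` in three situations: a nonzero edge `e` that is not a loop
(`e, e^*`), two distinct nonzero edges `e, f` with the same range (`e f^*, f e^*`), and a loop
`e` at `v` for which `p = v - e e^*` is nonzero (`e p, p e^*`). If none of them occurs, the nonzero edges are
loops at distinct vertices with `e e^* = v = e^* e`, so the generators commute and `L_K(E)` is
commutative (`LPA.commute_gen`). Treating vanishing edges this way avoids having to show that the
vertices are nonzero in `L_K(E)`.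
-/

noncomputable section
open scoped Classical
universe u

/-- `a` and `b` generate a free group of rank two, i.e. form a non-cyclic free subgroup. -/
def FreePair {G : Type*} [Group G] (a b : G) : Prop :=
  Function.Injective (FreeGroup.lift ![a, b] : FreeGroup (Fin 2) →* G)

/-- A field is absolute (locally finite) if every finite subset generates a finite
subfield over the prime subfield. -/
def IsAbsoluteField (K : Type*) [Field K] : Prop :=
  ∀ S : Finset K, ((Subfield.closure (S : Set K) : Subfield K) : Set K).Finite

/-- `a` is transcendental over the prime subfield of `K`. -/
def TranscendentalOverPrime (K : Type*) [Field K] (a : K) : Prop :=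
  ∀ p : Polynomial ℤ, Polynomial.aeval a p = 0 → p.map (Int.castRingHom K) = 0

/-- `a` and `b` are algebraically independent over the prime subfield of `K`. -/
def AlgIndepOverPrime (K : Type*) [Field K] (a b : K) : Prop :=
  ∀ p : MvPolynomial (Fin 2) ℤ, MvPolynomial.aeval ![a, b] p = 0 →
    MvPolynomial.map (Int.castRingHom K) p = 0

/-- A two-sided ideal is (left) primitive if it is the annihilator of a simple left module. -/
def IsPrimitiveIdeal {R : Type u} [Ring R] (P : TwoSidedIdeal R) : Prop :=
  ∃ (M : Type u) (_ : AddCommGroup M) (_ : Module R M),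
    IsSimpleModule R M ∧ ∀ x : R, x ∈ P ↔ ∀ m : M, x • m = 0

namespace LPA

/-- Generators of Cohn/Leavitt path algebras: vertices, edges and ghost edges. -/
inductive Gen (V : Type*) (E : Type*)
  | vertex : V → Gen V E
  | edge : E → Gen V E
  | ghost : E → Gen V E

section rels

variable (K : Type*) [Field K] {V E : Type*} (s r : E → V)

/-- The defining relations (V), (E1), (E2), (CK1) of the Cohn path algebra of the graph
with vertex set `V`, edge set `E`, source map `s` and range map `r`; together with the
identification of `1` with the sum of all vertices when the vertex set is finite. -/
inductive CohnRel : FreeAlgebra K (Gen V E) → FreeAlgebra K (Gen V E) → Prop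
  | vtx_mul (v w : V) :
      CohnRel (FreeAlgebra.ι K (Gen.vertex v) * FreeAlgebra.ι K (Gen.vertex w))
        (if v = w then FreeAlgebra.ι K (Gen.vertex v) else 0)
  | edge_src (e : E) :
      CohnRel (FreeAlgebra.ι K (Gen.vertex (s e)) * FreeAlgebra.ι K (Gen.edge e))
        (FreeAlgebra.ι K (Gen.edge e))
  | edge_rng (e : E) :
      CohnRel (FreeAlgebra.ι K (Gen.edge e) * FreeAlgebra.ι K (Gen.vertex (r e)))
        (FreeAlgebra.ι K (Gen.edge e))
  | ghost_rng (e : E) :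
      CohnRel (FreeAlgebra.ι K (Gen.vertex (r e)) * FreeAlgebra.ι K (Gen.ghost e))
        (FreeAlgebra.ι K (Gen.ghost e))
  | ghost_src (e : E) :
      CohnRel (FreeAlgebra.ι K (Gen.ghost e) * FreeAlgebra.ι K (Gen.vertex (s e)))
        (FreeAlgebra.ι K (Gen.ghost e))
  | ck1 (e f : E) :
      CohnRel (FreeAlgebra.ι K (Gen.ghost e) * FreeAlgebra.ι K (Gen.edge f))
        (if e = f then FreeAlgebra.ι K (Gen.vertex (r e)) else 0)
  | unit [Fintype V] :
      CohnRel (1 : FreeAlgebra K (Gen V E)) (∑ v : V, FreeAlgebra.ι K (Gen.vertex v))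

/-- The defining relations of the Leavitt path algebra: those of the Cohn path algebra
together with the (CK2) relations at every regular vertex. -/
inductive LeavittRel : FreeAlgebra K (Gen V E) → FreeAlgebra K (Gen V E) → Prop
  | cohn {a b : FreeAlgebra K (Gen V E)} : CohnRel K s r a b → LeavittRel a b
  | ck2 (v : V) (hfin : {e : E | s e = v}.Finite) (hne : {e : E | s e = v}.Nonempty) :
      LeavittRel (FreeAlgebra.ι K (Gen.vertex v))
        (∑ e ∈ hfin.toFinset, FreeAlgebra.ι K (Gen.edge e) * FreeAlgebra.ι K (Gen.ghost e))

/-- The Cohn path algebra of the graph `(V, E, s, r)` with coefficients in `K`. -/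
abbrev CohnPathAlgebra := RingQuot (CohnRel K s r)

/-- The Leavitt path algebra of the graph `(V, E, s, r)` with coefficients in `K`. -/
abbrev LeavittPathAlgebra := RingQuot (LeavittRel K s r)

/-- The image of a vertex in the Leavitt path algebra. -/
def vtx (v : V) : LeavittPathAlgebra K s r :=
  RingQuot.mkAlgHom K (LeavittRel K s r) (FreeAlgebra.ι K (Gen.vertex v))

/-- The image of an edge in the Leavitt path algebra. -/
def edg (e : E) : LeavittPathAlgebra K s r :=
  RingQuot.mkAlgHom K (LeavittRel K s r) (FreeAlgebra.ι K (Gen.edge e))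

/-- The image of a ghost edge in the Leavitt path algebra. -/
def gh (e : E) : LeavittPathAlgebra K s r :=
  RingQuot.mkAlgHom K (LeavittRel K s r) (FreeAlgebra.ι K (Gen.ghost e))

end rels

section graph

variable {V E : Type*}

/-- `u ≥ v` : there is a (finite, possibly trivial) path from `u` to `v`. -/
def Reaches (s r : E → V) (u v : V) : Prop :=
  Relation.ReflTransGen (fun a b => ∃ e : E, s e = a ∧ r e = b) u v

/-- A sink emits no edges. -/
def IsSink (s : E → V) (v : V) : Prop := ∀ e : E, s e ≠ v

/-- An infinite emitter emits infinitely many edges. -/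
def IsInfiniteEmitter (s : E → V) (v : V) : Prop := {e : E | s e = v}.Infinite

/-- A regular vertex is neither a sink nor an infinite emitter. -/
def IsRegular (s : E → V) (v : V) : Prop :=
  (∃ e : E, s e = v) ∧ {e : E | s e = v}.Finite

/-- Hereditary subsets of vertices. -/
def IsHereditary (s r : E → V) (H : Set V) : Prop :=
  ∀ u ∈ H, ∀ v : V, Reaches s r u v → v ∈ H

/-- Saturated subsets of vertices. -/
def IsSaturated (s r : E → V) (H : Set V) : Prop :=
  ∀ v : V, IsRegular s v → (∀ e : E, s e = v → r e ∈ H) → v ∈ H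

/-- A breaking vertex of a hereditary saturated set `H`. -/
def IsBreakingVertex (s r : E → V) (H : Set V) (w : V) : Prop :=
  w ∉ H ∧ IsInfiniteEmitter s w ∧
    {e : E | s e = w ∧ r e ∉ H}.Finite ∧ {e : E | s e = w ∧ r e ∉ H}.Nonempty

/-- An infinite path, as a sequence of composable edges. -/
def IsInfPath (s r : E → V) (p : ℕ → E) : Prop := ∀ i, r (p i) = s (p (i + 1))

/-- Tail equivalence of infinite paths. -/
def TailEquiv (p q : ℕ → E) : Prop := ∃ m n : ℕ, ∀ i, p (m + i) = q (n + i)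

/-- Prepending an edge to an infinite path. -/
def consPath (f : E) (p : ℕ → E) : ℕ → E := fun i =>
  match i with
  | 0 => f
  | (j + 1) => p j

/-- A cycle of length `m`, encoded as the `m`-periodic infinite path obtained by
traversing it repeatedly; the sources of its first `m` edges are pairwise distinct. -/
def IsCycle (s r : E → V) (m : ℕ) (c : ℕ → E) : Prop :=
  0 < m ∧ IsInfPath s r c ∧ (∀ i, c (i + m) = c i) ∧
    ∀ i j, i < m → j < m → s (c i) = s (c j) → i = j

/-- A cycle (as a periodic infinite path) has no exits. -/
def CycleNoExit (s : E → V) (c : ℕ → E) : Prop :=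
  ∀ i, ∀ e : E, s e = s (c i) → e = c i

/-- An exclusive cycle: every cycle based at one of its vertices is a rotation of it. -/
def IsExclusiveCycle (s r : E → V) (m : ℕ) (c : ℕ → E) : Prop :=
  IsCycle s r m c ∧ ∀ (m' : ℕ) (c' : ℕ → E), IsCycle s r m' c' →
    (∃ i, s (c' 0) = s (c i)) → ∃ k, ∀ j, c' j = c (j + k)

/-- `l` is (the list of edges of) a finite path starting at the vertex `v`
(the empty list is the trivial path at `v`). -/
def IsPathFrom (s r : E → V) (v : V) (l : List E) : Prop :=
  l.Chain' (fun e f => r e = s f) ∧ ∀ h : l ≠ [], s (l.head h) = v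

/-- The terminal vertex of a finite path starting at `v`. -/
def pathEnd (r : E → V) (v : V) (l : List E) : V :=
  if h : l ≠ [] then r (l.getLast h) else v

end graph

section elements

variable (K : Type*) [Field K] {V E : Type*} (s r : E → V)

/-- The finite set of edges emitted by a breaking vertex `w` of `H` whose range is
outside `H` (junk value `∅` if that set of edges is infinite). -/
def breakingFinset (H : Set V) (w : V) : Finset E :=
  if h : {e : E | s e = w ∧ r e ∉ H}.Finite then h.toFinset else ∅

/-- The element `w^H = w - ∑_{s(e) = w, r(e) ∉ H} e e^*` of the Leavitt path algebra. -/
def wHElem (H : Set V) (w : V) : LeavittPathAlgebra K s r :=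
  vtx K s r w - ∑ e ∈ breakingFinset s r H w, edg K s r e * gh K s r e

/-- The ideal `I(H, S)` generated by the vertices in `H` and the elements `w^H`, `w ∈ S`. -/
def idealHS (H : Set V) (S : Set V) : TwoSidedIdeal (LeavittPathAlgebra K s r) :=
  TwoSidedIdeal.span ((fun v => vtx K s r v) '' H ∪ (fun w => wHElem K s r H w) '' S)

end elements

end LPA

/-- A (left) primitive ring: a ring admitting a faithful simple left module. -/
def IsPrimitiveRing (R : Type u) [Ring R] : Prop :=
  ∃ (M : Type u) (_ : AddCommGroup M) (_ : Module R M),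
    IsSimpleModule R M ∧ ∀ x : R, (∀ m : M, x • m = 0) → x = 0

namespace LPA

section conc

variable {V E : Type*}

/-- Reachability through paths all of whose vertices beyond the first lie outside `H`,
i.e. reachability in the quotient graph `E ∖ (H, B_H)`. -/
def ReachesOutside (s r : E → V) (H : Set V) (u v : V) : Prop :=
  Relation.ReflTransGen (fun a b => ∃ e : E, s e = a ∧ r e = b ∧ r e ∉ H) u v

variable (K : Type*) [Field K] (s r : E → V)

/-- The standard conclusion: for an edge `f`, in characteristic zero the elements
`a = 1 + α f^*`, `b = 1 + α f` (with `α = 2` or transcendental over the prime field)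
generate a non-cyclic free subgroup of `L_K(E)^×`, and in characteristic `t > 0` the
elements `c = a + (β - 1) s(f) + (β⁻¹ - 1) r(f)`, `d = b + (β - 1) s(f) + (β⁻¹ - 1) r(f)`
(with `α, β` algebraically independent over the prime field) do. -/
def FreeSubgroupFromEdge (f : E) : Prop :=
  ∀ α β : K,
    (CharP K 0 → (α = 2 ∨ TranscendentalOverPrime K α) →
      ∃ ua ub : (LeavittPathAlgebra K s r)ˣ,
        (ua : LeavittPathAlgebra K s r) =
            1 + algebraMap K (LeavittPathAlgebra K s r) α * gh K s r f ∧
        (ub : LeavittPathAlgebra K s r) =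
            1 + algebraMap K (LeavittPathAlgebra K s r) α * edg K s r f ∧
        FreePair ua ub) ∧
    (∀ t : ℕ, 0 < t → CharP K t → AlgIndepOverPrime K α β →
      ∃ uc ud : (LeavittPathAlgebra K s r)ˣ,
        (uc : LeavittPathAlgebra K s r) =
            1 + algebraMap K (LeavittPathAlgebra K s r) α * gh K s r f
              + algebraMap K (LeavittPathAlgebra K s r) (β - 1) * vtx K s r (s f)
              + algebraMap K (LeavittPathAlgebra K s r) (β⁻¹ - 1) * vtx K s r (r f) ∧
        (ud : LeavittPathAlgebra K s r) =
            1 + algebraMap K (LeavittPathAlgebra K s r) α * edg K s r f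
              + algebraMap K (LeavittPathAlgebra K s r) (β - 1) * vtx K s r (s f)
              + algebraMap K (LeavittPathAlgebra K s r) (β⁻¹ - 1) * vtx K s r (r f) ∧
        FreePair uc ud)

end conc

end LPA

/-! ### Fields that are not absolute carry a non-trivial valuation -/

/-- A field all of whose elements are integral over `ℤ` has positive characteristic `p`
(otherwise `1/2` would be integral) and is algebraic over `𝔽_p`, so it is absolute. -/
lemma exists_not_isIntegral {K : Type*} [Field K] (hK : ¬ IsAbsoluteField K) :
    ∃ t : K, ¬ IsIntegral ℤ t := by
  by_contra! hall
  apply hK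
  intro S
  obtain ⟨p, hp⟩ := CharP.exists K
  rcases CharP.char_is_prime_or_zero K p with hprime | rfl
  · have := Fact.mk hprime
    let := ZMod.algebra K p
    have halg : ∀ x : K, IsIntegral (ZMod p) x := fun x => (hall x).tower_top
    have : FiniteDimensional (ZMod p) (IntermediateField.adjoin (ZMod p) (S : Set K)) :=
      IntermediateField.finiteDimensional_adjoin fun x _ => halg x
    have : Finite (IntermediateField.adjoin (ZMod p) (S : Set K)) :=
      Module.finite_of_finite (ZMod p)
    refine Set.Finite.subset
      (Set.toFinite (IntermediateField.adjoin (ZMod p) (S : Set K) : Set K)) ?_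
    have hle : Subfield.closure (S : Set K) ≤
        (IntermediateField.adjoin (ZMod p) (S : Set K)).toSubfield :=
      Subfield.closure_le.2 (IntermediateField.subset_adjoin (ZMod p) (S : Set K))
    exact hle
  · exfalso
    have : CharZero K := CharP.charP_to_charZero K
    have h := hall (algebraMap ℚ K (1 / 2))
    rw [isIntegral_algebraMap_iff (algebraMap ℚ K).injective,
      IsIntegrallyClosed.isIntegral_iff] at h
    obtain ⟨n, hn⟩ := h
    have h2 : (2 * n : ℚ) = 1 := by
      rw [eq_intCast] at hn
      rw [hn]; norm_num
    have h3 : 2 * n = 1 := by exact_mod_cast h2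
    omega

lemma exists_valuationSubring_notMem {K : Type*} [Field K] (hK : ¬ IsAbsoluteField K) :
    ∃ (O : ValuationSubring K) (t : K), t ∉ O := by
  obtain ⟨t, ht⟩ := exists_not_isIntegral hK
  obtain ⟨O, -, hO⟩ := Subring.exists_le_valuationSubring_of_isIntegrallyClosedIn
    (R := (integralClosure ℤ K).toSubring) (x := t) ht
  exact ⟨O, t, hO⟩

/-! ### Units attached to idempotents -/

/-- The unit `1 + (t - 1) e` for an idempotent `e` and a nonzero scalar `t`. It acts as `t` on the
image of `e` and as the identity on its kernel. -/
def idemUnit {K A : Type*} [Field K] [Ring A] [Algebra K A] (e : A) (he : e * e = e)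
    (t : K) (ht : t ≠ 0) : Aˣ where
  val := 1 + (t - 1) • e
  inv := 1 + (t⁻¹ - 1) • e
  val_inv := by
    have h : (t - 1) + (t⁻¹ - 1) + (t - 1) * (t⁻¹ - 1) = 0 := by field_simp; ring
    have : (1 + (t - 1) • e) * (1 + (t⁻¹ - 1) • e)
        = 1 + ((t - 1) + (t⁻¹ - 1) + (t - 1) * (t⁻¹ - 1)) • e := by
      simp only [mul_add, add_mul, one_mul, mul_one, smul_mul_smul_comm, he, add_smul]
      abel
    rw [this, h, zero_smul, add_zero]
  inv_val := by
    have h : (t - 1) + (t⁻¹ - 1) + (t - 1) * (t⁻¹ - 1) = 0 := by field_simp; ring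
    have : (1 + (t⁻¹ - 1) • e) * (1 + (t - 1) • e)
        = 1 + ((t - 1) + (t⁻¹ - 1) + (t - 1) * (t⁻¹ - 1)) • e := by
      simp only [mul_add, add_mul, one_mul, mul_one, smul_mul_smul_comm, he, add_smul,
        mul_comm (t⁻¹ - 1) (t - 1)]
      abel
    rw [this, h, zero_smul, add_zero]

/-! ### Ping-pong on the plane -/

/-- The projection of `K × K` onto the first axis along the second. -/
def axisProj (K : Type*) [Field K] : Module.End K (K × K) where
  toFun p := (p.1, 0)
  map_add' p q := by simp
  map_smul' c p := by simp

/-- The projection of `K × K` onto the line spanned by `(1, 1)` along the line spanned by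
`(1 + t⁻¹, 1)`. -/
def skewProj {K : Type*} [Field K] (t : K) : Module.End K (K × K) where
  toFun p := (-t * p.1 + (t + 1) * p.2, -t * p.1 + (t + 1) * p.2)
  map_add' p q := by ext <;> simp <;> ring
  map_smul' c p := by ext <;> simp <;> ring

lemma axisProj_idem (K : Type*) [Field K] : axisProj K * axisProj K = axisProj K := rfl

lemma skewProj_idem {K : Type*} [Field K] (t : K) : skewProj t * skewProj t = skewProj t := by
  apply LinearMap.ext
  intro p
  simp only [Module.End.mul_apply, skewProj, LinearMap.coe_mk, AddHom.coe_mk]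
  ext <;> simp only <;> ring

/-- The group `(End_K (K × K))ˣ` acts on the set of nonzero vectors of `K × K`. -/
instance instMulActionNonzero (K : Type*) [Field K] :
    MulAction (Module.End K (K × K))ˣ {p : K × K // p ≠ 0} where
  smul g p := ⟨g • p.1, (smul_ne_zero_iff_ne g).2 p.2⟩
  one_smul p := Subtype.ext (one_smul _ p.1)
  mul_smul g h p := Subtype.ext (mul_smul g h p.1)

lemma coe_smul_nonzero {K : Type*} [Field K] (g : (Module.End K (K × K))ˣ)
    (p : {p : K × K // p ≠ 0}) : ((g • p : {p : K × K // p ≠ 0}) : K × K) = g • (p : K × K) := rfl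

section PingPong

variable {K : Type*} [Field K] {Γ : Type*} [LinearOrderedCommGroupWithZero Γ]

lemma val_axis {v : Valuation K Γ} {t : K} (ht : 1 < v t) {x y : K} (hxy : (x, y) ≠ 0)
    (h : ¬ v x < v y) : v y < v (t * x) := by
  have hx : x ≠ 0 := by
    rintro rfl
    have hy : y ≠ 0 := by
      rintro rfl
      exact hxy rfl
    apply h
    rw [map_zero]
    exact zero_lt_iff.2 ((Valuation.ne_zero_iff v).2 hy)
  have hx' : 0 < v x := zero_lt_iff.2 ((Valuation.ne_zero_iff v).2 hx)
  rw [map_mul]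
  refine (not_lt.1 h).trans_lt ?_
  simpa using mul_lt_mul_of_pos_right ht hx'

lemma val_axis_inv {v : Valuation K Γ} {t : K} (ht : 1 < v t) {x y : K} (hxy : (x, y) ≠ 0)
    (h : ¬ v y < v x) : v (t⁻¹ * x) < v y := by
  have ht0 : t ≠ 0 := by
    rintro rfl
    simp at ht
  by_contra h'
  have hne : ((t⁻¹ * x, y) : K × K) ≠ 0 := by
    intro h0
    rw [Prod.mk_eq_zero, mul_eq_zero, or_iff_right (inv_ne_zero ht0)] at h0
    exact hxy (Prod.mk_eq_zero.2 h0)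
  have := val_axis ht hne h'
  rw [mul_inv_cancel_left₀ ht0] at this
  exact h this

/-- Near the line spanned by `(1, 1)` or by `(1 + t⁻¹, 1)`, both coordinates have the same
valuation; here these neighbourhoods are described by the coordinates
`w₂ = x - y` and `w₁ = x - y - t⁻¹ y`. -/
lemma val_eq_of_skew {v : Valuation K Γ} {t : K} (ht : 1 < v t) {x y : K}
    (h : v (x - y) ≠ v (x - y - t⁻¹ * y)) : v x = v y := by
  have ht0 : t ≠ 0 := by
    rintro rfl
    simp at ht
  have hle : v (x - y) ≤ v (t⁻¹ * y) := by
    by_contra! hlt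
    exact h (Valuation.map_sub_eq_of_lt_left v hlt).symm
  have hy : y ≠ 0 := by
    rintro rfl
    simp at h
  have hlt : v (x - y) < v y := by
    refine hle.trans_lt (val_axis_inv ht (x := y) (y := y) ?_ (lt_irrefl _))
    intro h0
    exact hy (Prod.mk_eq_zero.1 h0).1
  have := Valuation.map_add_eq_of_lt_left v hlt
  rwa [add_sub_cancel] at this

end PingPong

open scoped Pointwise in
/-- The ping-pong lemma for two generators. The library version wants the index type in the universe
of the group, whence the detour through `ULift`. -/
lemma freePair_of_pingPong {G : Type u} [Group G] {α : Type*} [MulAction G α] (a : Fin 2 → G)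
    (X Y : Fin 2 → Set α) (hne : ∀ i, (X i).Nonempty)
    (hX : Pairwise fun i j => Disjoint (X i) (X j))
    (hY : Pairwise fun i j => Disjoint (Y i) (Y j)) (hXY : ∀ i j, Disjoint (X i) (Y j))
    (ha : ∀ i, a i • (Y i)ᶜ ⊆ X i) (ha' : ∀ i, (a i)⁻¹ • (X i)ᶜ ⊆ Y i) :
    Function.Injective (FreeGroup.lift a) := by
  have h := FreeGroup.injective_lift_of_ping_pong (ι := ULift.{u} (Fin 2)) (G := G) (α := α)
    (fun i => a i.down) (fun i => X i.down) (fun i => Y i.down) (fun i => hne i.down)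
    (fun i j hij => hX fun h => hij (ULift.ext i j h))
    (fun i j hij => hY fun h => hij (ULift.ext i j h))
    (fun i j => hXY i.down j.down) (fun i => ha i.down) (fun i => ha' i.down)
  have hcomp : FreeGroup.lift a = (FreeGroup.lift fun i : ULift.{u} (Fin 2) => a i.down).comp
      (FreeGroup.freeGroupCongr Equiv.ulift.{u}.symm).toMonoidHom := by
    ext i
    simp
  rw [hcomp, MonoidHom.coe_comp]
  exact h.comp (MulEquiv.injective _)

/-- The ping-pong argument. Let `v` be the valuation of `O`, so that `v t > 1`. The two
diagonalizable maps with eigenvalues `t, 1` play ping-pong on neighbourhoods of their four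
eigenlines, on which the ratio `x / y` is `∞, 0` for the first map and `1, 1 + t⁻¹` for the second. -/
lemma freePair_plane {K : Type*} [Field K] (O : ValuationSubring K) (t : K) (ht : t ∉ O)
    (ht0 : t ≠ 0) :
    FreePair (idemUnit (axisProj K) (axisProj_idem K) t ht0)
      (idemUnit (skewProj t) (skewProj_idem t) t ht0) := by
  set v := O.valuation with hv
  have ht1 : 1 < v t := by
    rw [← not_le, hv, O.valuation_le_one_iff]
    exact ht
  have hti : v t⁻¹ < 1 := by
    rw [map_inv₀]
    exact inv_lt_one_of_one_lt₀ ht1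
  -- The coordinates in which the second map is diagonal.
  let w₁ : K × K → K := fun p => p.1 - p.2 - t⁻¹ * p.2
  let w₂ : K × K → K := fun p => p.1 - p.2
  have hw : ∀ p : K × K, p ≠ 0 → (w₁ p, w₂ p) ≠ 0 := by
    intro p hp h0
    rw [Prod.mk_eq_zero] at h0
    obtain ⟨h1, h2⟩ := h0
    simp only [w₁, w₂] at h1 h2
    rw [h2, zero_sub, neg_eq_zero, mul_eq_zero, or_iff_right (inv_ne_zero ht0)] at h1
    rw [h1, sub_zero] at h2
    exact hp (Prod.ext h2 h1)
  have hA : ∀ p : K × K, idemUnit (axisProj K) (axisProj_idem K) t ht0 • p = (t * p.1, p.2) := by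
    intro p
    simp only [Units.smul_def, idemUnit, axisProj, Module.End.smul_def, LinearMap.add_apply,
      Module.End.one_apply, LinearMap.smul_apply, LinearMap.coe_mk, AddHom.coe_mk]
    ext <;> simp
    ring
  have hAi : ∀ p : K × K, (idemUnit (axisProj K) (axisProj_idem K) t ht0)⁻¹ • p
      = (t⁻¹ * p.1, p.2) := by
    intro p
    rw [inv_smul_eq_iff, hA]
    ext <;> simp [ht0]
  have hB1 : ∀ p : K × K, w₁ (idemUnit (skewProj t) (skewProj_idem t) t ht0 • p) = t * w₁ p := by
    intro p
    simp only [w₁, Units.smul_def, idemUnit, skewProj, Module.End.smul_def, LinearMap.add_apply,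
      Module.End.one_apply, LinearMap.smul_apply, LinearMap.coe_mk, AddHom.coe_mk, Prod.fst_add,
      Prod.snd_add, Prod.smul_fst, Prod.smul_snd, smul_eq_mul]
    field_simp
    ring
  have hB2 : ∀ p : K × K, w₂ (idemUnit (skewProj t) (skewProj_idem t) t ht0 • p) = w₂ p := by
    intro p
    simp only [w₂, Units.smul_def, idemUnit, skewProj, Module.End.smul_def, LinearMap.add_apply,
      Module.End.one_apply, LinearMap.smul_apply, LinearMap.coe_mk, AddHom.coe_mk, Prod.fst_add,
      Prod.snd_add, Prod.smul_fst, Prod.smul_snd, smul_eq_mul]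
    ring
  have hBi1 : ∀ p : K × K, w₁ ((idemUnit (skewProj t) (skewProj_idem t) t ht0)⁻¹ • p)
      = t⁻¹ * w₁ p := by
    intro p
    rw [eq_inv_mul_iff_mul_eq₀ ht0, ← hB1, smul_inv_smul]
  have hBi2 : ∀ p : K × K, w₂ ((idemUnit (skewProj t) (skewProj_idem t) t ht0)⁻¹ • p) = w₂ p := by
    intro p
    rw [← hB2, smul_inv_smul]
  let X₀ : Set {p : K × K // p ≠ 0} := {p | v p.1.2 < v p.1.1}
  let X₁ : Set {p : K × K // p ≠ 0} := {p | v (w₂ p.1) < v (w₁ p.1)}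
  let Y₀ : Set {p : K × K // p ≠ 0} := {p | v p.1.1 < v p.1.2}
  let Y₁ : Set {p : K × K // p ≠ 0} := {p | v (w₁ p.1) < v (w₂ p.1)}
  have hX₁ : ∀ p ∈ X₁, v p.1.1 = v p.1.2 := fun p hp => val_eq_of_skew ht1 (ne_of_lt hp)
  have hY₁ : ∀ p ∈ Y₁, v p.1.1 = v p.1.2 := fun p hp => val_eq_of_skew ht1 (ne_of_gt hp)
  have hX01 : Disjoint X₀ X₁ := Set.disjoint_left.2 fun p hp hq => (ne_of_gt hp) (hX₁ p hq)
  have hY01 : Disjoint Y₀ Y₁ := Set.disjoint_left.2 fun p hp hq => (ne_of_lt hp) (hY₁ p hq)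
  refine freePair_of_pingPong (α := {p : K × K // p ≠ 0}) _ ![X₀, X₁] ![Y₀, Y₁] ?_ ?_ ?_ ?_ ?_ ?_
  · intro i
    fin_cases i
    · exact ⟨⟨(1, 0), by simp⟩, by simp [X₀]⟩
    · refine ⟨⟨(1, 1), by simp⟩, ?_⟩
      have : 0 < v t := zero_lt_one.trans ht1
      simpa [X₁, w₁, w₂, ht0] using this
  · intro i j hij
    fin_cases i <;> fin_cases j
    · exact absurd rfl hij
    · exact hX01
    · exact hX01.symm
    · exact absurd rfl hij
  · intro i j hij
    fin_cases i <;> fin_cases j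
    · exact absurd rfl hij
    · exact hY01
    · exact hY01.symm
    · exact absurd rfl hij
  · intro i j
    fin_cases i <;> fin_cases j
    · exact Set.disjoint_left.2 fun p hp hq =>
        lt_asymm (a := v p.1.2) (b := v p.1.1) hp hq
    · exact Set.disjoint_left.2 fun p hp hq => (ne_of_gt hp) (hY₁ p hq)
    · exact Set.disjoint_left.2 fun p hp hq => (ne_of_lt hq) (hX₁ p hp)
    · exact Set.disjoint_left.2 fun p hp hq =>
        lt_asymm (a := v (w₂ p.1)) (b := v (w₁ p.1)) hp hq
  · intro i
    fin_cases i
    · rintro _ ⟨p, hp, rfl⟩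
      change v (_ : K × K).2 < v (_ : K × K).1
      simp only [coe_smul_nonzero, Matrix.cons_val_zero, Fin.zero_eta, hA]
      exact val_axis ht1 p.2 hp
    · rintro _ ⟨p, hp, rfl⟩
      change v (w₂ _) < v (w₁ _)
      simp only [coe_smul_nonzero, Matrix.cons_val_one, Fin.mk_one, Matrix.cons_val_fin_one,
        hB1, hB2]
      exact val_axis ht1 (hw p.1 p.2) hp
  · intro i
    fin_cases i
    · rintro _ ⟨p, hp, rfl⟩
      change v (_ : K × K).1 < v (_ : K × K).2
      simp only [coe_smul_nonzero, Matrix.cons_val_zero, Fin.zero_eta, hAi]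
      exact val_axis_inv ht1 p.2 hp
    · rintro _ ⟨p, hp, rfl⟩
      change v (w₁ _) < v (w₂ _)
      simp only [coe_smul_nonzero, Matrix.cons_val_one, Fin.mk_one,
        Matrix.cons_val_fin_one, hBi1, hBi2]
      exact val_axis_inv ht1 (hw p.1 p.2) hp

/-! ### Algebras with a pair of 2 × 2 matrix units -/

/-- The relations say that `xy, x, y, yx` multiply like the matrix units `E₁₁, E₁₂, E₂₁, E₂₂`.
The plane `K xy + K y`, the first column, is then stable under left multiplication by them, and the
free pair acting on the plane lifts to units of `A`. -/
lemma exists_freePair_of_matrixUnits {K A : Type*} [Field K] [Ring A] [Algebra K A]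
    (hK : ¬ IsAbsoluteField K) (x y : A) (hxx : x * x = 0) (hyy : y * y = 0)
    (hxyx : x * y * x = x) (hyxy : y * x * y = y) (hx : x ≠ 0) :
    ∃ a b : Aˣ, FreePair a b := by
  obtain ⟨O, t, ht⟩ := exists_valuationSubring_notMem hK
  have ht0 : t ≠ 0 := by
    rintro rfl
    exact ht O.zero_mem
  have hxx' : ∀ z, x * (x * z) = 0 := fun z => by rw [← mul_assoc, hxx, zero_mul]
  have hyy' : ∀ z, y * (y * z) = 0 := fun z => by rw [← mul_assoc, hyy, zero_mul]
  have h1 : x * (y * x) = x := by rw [← mul_assoc, hxyx]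
  have h2 : y * (x * y) = y := by rw [← mul_assoc, hyxy]
  have h1' : ∀ z, x * (y * (x * z)) = x * z := fun z => by
    rw [← mul_assoc y, ← mul_assoc x, h1]
  have h2' : ∀ z, y * (x * (y * z)) = y * z := fun z => by
    rw [← mul_assoc x, ← mul_assoc y, h2]
  let ι : K × K → A := fun p => p.1 • (x * y) + p.2 • y
  have hι : ∀ p, ι p = 0 → p = 0 := by
    intro p hp
    have e1 : x * y * ι p * x = p.1 • x := by
      simp [ι, mul_add, mul_assoc, hyy, h1, h1']
    have e2 : x * ι p * x = p.2 • x := by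
      simp [ι, mul_add, mul_assoc, h1, hxx']
    rw [hp, mul_zero, zero_mul] at e1 e2
    exact Prod.ext ((smul_eq_zero.1 e1.symm).resolve_right hx)
      ((smul_eq_zero.1 e2.symm).resolve_right hx)
  have hι_sub : ∀ p q, ι (p - q) = ι p - ι q := by
    intro p q
    simp only [ι, Prod.fst_sub, Prod.snd_sub, sub_smul]
    abel
  have hι_inj : ∀ p q, ι p = ι q → p = q := fun p q h =>
    sub_eq_zero.1 (hι _ (by rw [hι_sub, h, sub_self]))
  let P : A := x * y
  let Q : A := (-t) • (x * y) + (t + 1) • x + (-t) • y + (t + 1) • (y * x)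
  have hP : P * P = P := by simp [P, mul_assoc, h2]
  have hQ : Q * Q = Q := by
    simp only [Q, mul_add, add_mul, smul_mul_smul_comm, mul_assoc, hxx, hyy, hxx', hyy', h1, h2,
      smul_zero, mul_zero, add_zero, zero_add]
    module
  have hPι : ∀ p, P * ι p = ι (axisProj K p) := by
    intro p
    simp [ι, P, axisProj, mul_add, mul_assoc, hyy, h2]
  have hQι : ∀ p, Q * ι p = ι (skewProj t p) := by
    intro p
    simp only [ι, Q, skewProj, LinearMap.coe_mk, AddHom.coe_mk, mul_add, add_mul,
      smul_mul_smul_comm, mul_assoc, hyy, hxx', h2, smul_zero, mul_zero, add_zero, zero_add]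
    module
  have hunit : ∀ (e : A) (he : e * e = e) (f : Module.End K (K × K)) (hf : f * f = f),
      (∀ p, e * ι p = ι (f p)) →
      ∀ p, (idemUnit e he t ht0 : A) * ι p = ι (idemUnit f hf t ht0 • p) := by
    intro e he f hf hef p
    have : idemUnit f hf t ht0 • p = p + (t - 1) • f p := rfl
    rw [this]
    change (1 + (t - 1) • e) * ι p = _
    rw [add_mul, one_mul, smul_mul_assoc, hef]
    simp only [ι, Prod.fst_add, Prod.snd_add, Prod.smul_fst, Prod.smul_snd, smul_eq_mul]
    module
  refine ⟨idemUnit P hP t ht0, idemUnit Q hQ t ht0, ?_⟩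
  have hplane := freePair_plane O t ht ht0
  -- `φ` and `ψ` are the maps from the free group to `Aˣ` and to the linear group of the plane;
  -- `ι` intertwines them, so `φ` is injective because `ψ` is.
  set ψ : FreeGroup (Fin 2) →* (Module.End K (K × K))ˣ := FreeGroup.lift
    ![idemUnit (axisProj K) (axisProj_idem K) t ht0,
      idemUnit (skewProj t) (skewProj_idem t) t ht0] with hψ
  change Function.Injective ψ at hplane
  unfold FreePair
  set φ : FreeGroup (Fin 2) →* Aˣ :=
    FreeGroup.lift ![idemUnit P hP t ht0, idemUnit Q hQ t ht0] with hφ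
  have hgen : ∀ i p, (φ (FreeGroup.of i) : A) * ι p = ι (ψ (FreeGroup.of i) • p) := by
    intro i p
    rw [hφ, hψ, FreeGroup.lift_apply_of, FreeGroup.lift_apply_of]
    fin_cases i
    · exact hunit P hP _ (axisProj_idem K) hPι p
    · exact hunit Q hQ _ (skewProj_idem t) hQι p
  have hinter : ∀ g p, (φ g : A) * ι p = ι (ψ g • p) := by
    intro g
    induction g using FreeGroup.induction_on with
    | C1 => intro p; simp
    | of i => exact hgen i
    | inv_of i _ =>
      intro p
      rw [map_inv, map_inv, Units.inv_mul_eq_iff_eq_mul, hgen, smul_inv_smul]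
    | mul g h hg hh =>
      intro p
      rw [map_mul, map_mul, Units.val_mul, mul_assoc, hh, hg, mul_smul]
  rw [injective_iff_map_eq_one]
  intro g hg
  rw [injective_iff_map_eq_one] at hplane
  apply hplane
  ext1
  apply LinearMap.ext
  intro p
  have := hinter g p
  rw [hg, Units.val_one, one_mul] at this
  exact (hι_inj _ _ this).symm

/-! ### Matrix units in Leavitt path algebras -/

namespace LPA

section generators

variable (K : Type*) [Field K] {V E : Type*} (s r : E → V)

lemma vtx_mul_vtx (v w : V) :
    vtx K s r v * vtx K s r w = if v = w then vtx K s r v else 0 := by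
  have := RingQuot.mkAlgHom_rel K (LeavittRel.cohn (CohnRel.vtx_mul (K := K) (s := s) (r := r) v w))
  rw [map_mul] at this
  rw [vtx, vtx, this]
  split_ifs <;> simp

lemma vtx_mul_edg (e : E) : vtx K s r (s e) * edg K s r e = edg K s r e := by
  have := RingQuot.mkAlgHom_rel K (LeavittRel.cohn (CohnRel.edge_src (K := K) (s := s) (r := r) e))
  rwa [map_mul] at this

lemma edg_mul_vtx (e : E) : edg K s r e * vtx K s r (r e) = edg K s r e := by
  have := RingQuot.mkAlgHom_rel K (LeavittRel.cohn (CohnRel.edge_rng (K := K) (s := s) (r := r) e))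
  rwa [map_mul] at this

lemma vtx_mul_gh (e : E) : vtx K s r (r e) * gh K s r e = gh K s r e := by
  have := RingQuot.mkAlgHom_rel K (LeavittRel.cohn (CohnRel.ghost_rng (K := K) (s := s) (r := r) e))
  rwa [map_mul] at this

lemma gh_mul_vtx (e : E) : gh K s r e * vtx K s r (s e) = gh K s r e := by
  have := RingQuot.mkAlgHom_rel K (LeavittRel.cohn (CohnRel.ghost_src (K := K) (s := s) (r := r) e))
  rwa [map_mul] at this

lemma gh_mul_edg (e f : E) :
    gh K s r e * edg K s r f = if e = f then vtx K s r (r e) else 0 := by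
  have := RingQuot.mkAlgHom_rel K (LeavittRel.cohn (CohnRel.ck1 (K := K) (s := s) (r := r) e f))
  rw [map_mul] at this
  rw [gh, edg, this]
  split_ifs
  · rfl
  · simp

/-- The image of a generator in the Leavitt path algebra. -/
def gen (g : Gen V E) : LeavittPathAlgebra K s r :=
  RingQuot.mkAlgHom K (LeavittRel K s r) (FreeAlgebra.ι K g)

lemma commute_of_gen (h : ∀ g g' : Gen V E, Commute (gen K s r g) (gen K s r g'))
    (x y : LeavittPathAlgebra K s r) : Commute x y := by
  obtain ⟨x, rfl⟩ := RingQuot.mkAlgHom_surjective K (LeavittRel K s r) x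
  obtain ⟨y, rfl⟩ := RingQuot.mkAlgHom_surjective K (LeavittRel K s r) y
  induction x using FreeAlgebra.induction with
  | grade0 c => rw [AlgHom.commutes]; exact Algebra.commute_algebraMap_left _ _
  | mul a b ha hb => rw [map_mul]; exact ha.mul_left hb
  | add a b ha hb => rw [map_add]; exact ha.add_left hb
  | grade1 g =>
    induction y using FreeAlgebra.induction with
    | grade0 c => rw [AlgHom.commutes]; exact Algebra.commute_algebraMap_right _ _
    | mul a b ha hb => rw [map_mul]; exact ha.mul_right hb
    | add a b ha hb => rw [map_add]; exact ha.add_right hb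
    | grade1 g' => exact h g g'

variable {K s r}

lemma gh_eq_zero {e : E} (h : edg K s r e = 0) : gh K s r e = 0 := by
  have h1 := gh_mul_edg K s r e e
  rw [h, mul_zero, if_pos rfl] at h1
  rw [← vtx_mul_gh, ← h1, zero_mul]

lemma edg_eq_zero_of_vtx {e : E} (h : vtx K s r (r e) = 0) : edg K s r e = 0 := by
  rw [← edg_mul_vtx, h, mul_zero]

end generators

section commutative

variable {K : Type*} [Field K] {V E : Type*} {s r : E → V}

/-- If the edges that are nonzero in `L_K(E)` are loops, no two of them at the same vertex, and every
loop `e` satisfies `e e^* = s(e)`, then the generators commute. -/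
lemma commute_gen
    (h1 : ∀ e : E, edg K s r e ≠ 0 → s e = r e)
    (h2 : ∀ e f : E, edg K s r e ≠ 0 → s e = s f → r e = r f → e = f)
    (h3 : ∀ e : E, s e = r e → edg K s r e * gh K s r e = vtx K s r (s e))
    (g g' : Gen V E) : Commute (gen K s r g) (gen K s r g') := by
  have hve : ∀ v e, Commute (vtx K s r v) (edg K s r e) := by
    intro v e
    by_cases he : edg K s r e = 0
    · rw [he]; exact Commute.zero_right _
    have hl := h1 e he
    have ea : vtx K s r (s e) * edg K s r e = edg K s r e := vtx_mul_edg K s r e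
    have eb : edg K s r e * vtx K s r (s e) = edg K s r e := by rw [hl, edg_mul_vtx]
    by_cases hv : v = s e
    · rw [hv]; exact ea.trans eb.symm
    · have e1 : vtx K s r v * edg K s r e = 0 := by
        rw [← ea, ← mul_assoc, vtx_mul_vtx, if_neg hv, zero_mul]
      have e2 : edg K s r e * vtx K s r v = 0 := by
        rw [← eb, mul_assoc, vtx_mul_vtx, if_neg (Ne.symm hv), mul_zero]
      exact e1.trans e2.symm
  have hvg : ∀ v e, Commute (vtx K s r v) (gh K s r e) := by
    intro v e
    by_cases he : edg K s r e = 0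
    · rw [gh_eq_zero he]; exact Commute.zero_right _
    have hl := h1 e he
    have ea : vtx K s r (s e) * gh K s r e = gh K s r e := by rw [hl, vtx_mul_gh]
    have eb : gh K s r e * vtx K s r (s e) = gh K s r e := gh_mul_vtx K s r e
    by_cases hv : v = s e
    · rw [hv]; exact ea.trans eb.symm
    · have e1 : vtx K s r v * gh K s r e = 0 := by
        rw [← ea, ← mul_assoc, vtx_mul_vtx, if_neg hv, zero_mul]
      have e2 : gh K s r e * vtx K s r v = 0 := by
        rw [← eb, mul_assoc, vtx_mul_vtx, if_neg (Ne.symm hv), mul_zero]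
      exact e1.trans e2.symm
  -- Elements supported at different vertices multiply to zero.
  have horth : ∀ (a b : LeavittPathAlgebra K s r) (v w : V), v ≠ w →
      a * vtx K s r v = a → vtx K s r w * b = b → a * b = 0 := by
    intro a b v w hvw ha hb
    rw [← ha, ← hb, mul_assoc, ← mul_assoc (vtx K s r v), vtx_mul_vtx, if_neg hvw, zero_mul,
      mul_zero]
  have hpair : ∀ e f : E, edg K s r e ≠ 0 → edg K s r f ≠ 0 → e ≠ f → s e ≠ s f := by
    intro e f he hf hef hs
    exact hef (h2 e f he hs (by rw [← h1 e he, ← h1 f hf, hs]))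
  have hee : ∀ e f, Commute (edg K s r e) (edg K s r f) := by
    intro e f
    by_cases he : edg K s r e = 0
    · rw [he]; exact Commute.zero_left _
    by_cases hf : edg K s r f = 0
    · rw [hf]; exact Commute.zero_right _
    by_cases hef : e = f
    · rw [hef]
    have hs := hpair e f he hf hef
    have e1 := horth _ _ (s e) (s f) hs (by rw [h1 e he, edg_mul_vtx]) (vtx_mul_edg K s r f)
    have e2 := horth _ _ (s f) (s e) hs.symm (by rw [h1 f hf, edg_mul_vtx]) (vtx_mul_edg K s r e)
    exact e1.trans e2.symm
  have hgg : ∀ e f, Commute (gh K s r e) (gh K s r f) := by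
    intro e f
    by_cases he : edg K s r e = 0
    · rw [gh_eq_zero he]; exact Commute.zero_left _
    by_cases hf : edg K s r f = 0
    · rw [gh_eq_zero hf]; exact Commute.zero_right _
    by_cases hef : e = f
    · rw [hef]
    have hs := hpair e f he hf hef
    have e1 := horth _ _ (s e) (s f) hs (gh_mul_vtx K s r e) (by rw [h1 f hf, vtx_mul_gh])
    have e2 := horth _ _ (s f) (s e) hs.symm (gh_mul_vtx K s r f) (by rw [h1 e he, vtx_mul_gh])
    exact e1.trans e2.symm
  have heg : ∀ e f, Commute (edg K s r e) (gh K s r f) := by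
    intro e f
    by_cases he : edg K s r e = 0
    · rw [he]; exact Commute.zero_left _
    by_cases hf : edg K s r f = 0
    · rw [gh_eq_zero hf]; exact Commute.zero_right _
    by_cases hef : e = f
    · subst hef
      have e1 := gh_mul_edg K s r e e
      rw [if_pos rfl, ← h1 e he] at e1
      exact (h3 e (h1 e he)).trans e1.symm
    have hs := hpair e f he hf hef
    have e1 := horth _ _ (s e) (s f) hs (by rw [h1 e he, edg_mul_vtx]) (by rw [h1 f hf, vtx_mul_gh])
    have e2 := horth _ _ (s f) (s e) hs.symm (gh_mul_vtx K s r f) (vtx_mul_edg K s r e)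
    exact e1.trans e2.symm
  have hvv : ∀ v w, Commute (vtx K s r v) (vtx K s r w) := by
    intro v w
    by_cases hvw : v = w
    · rw [hvw]
    · exact ((vtx_mul_vtx K s r v w).trans (if_neg hvw)).trans
        ((vtx_mul_vtx K s r w v).trans (if_neg (Ne.symm hvw))).symm
  rcases g with v | e | e <;> rcases g' with w | f | f
  · exact hvv v w
  · exact hve v f
  · exact hvg v f
  · exact (hve w e).symm
  · exact hee e f
  · exact heg e f
  · exact (hvg w e).symm
  · exact (heg f e).symm
  · exact hgg e f

end commutative

section units

variable {K : Type*} [Field K] {V E : Type*} {s r : E → V}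

/-- A nonzero edge `e` that is not a loop gives the matrix units `e, e^*`. -/
lemma freePair_of_nonloop (hK : ¬ IsAbsoluteField K) {e : E} (he : edg K s r e ≠ 0)
    (hl : s e ≠ r e) : ∃ a b : (LeavittPathAlgebra K s r)ˣ, FreePair a b := by
  have hge : gh K s r e * edg K s r e = vtx K s r (r e) := by rw [gh_mul_edg, if_pos rfl]
  refine exists_freePair_of_matrixUnits hK (edg K s r e) (gh K s r e) ?_ ?_ ?_ ?_ he
  · rw [← edg_mul_vtx, mul_assoc]
    nth_rewrite 2 [← vtx_mul_edg]
    rw [mul_assoc (vtx K s r (s e)), edg_mul_vtx, ← mul_assoc (vtx K s r (r e)), vtx_mul_vtx,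
      if_neg (Ne.symm hl), zero_mul, mul_zero]
  · nth_rewrite 1 [← gh_mul_vtx]
    nth_rewrite 2 [← vtx_mul_gh]
    rw [mul_assoc, ← mul_assoc (vtx K s r (s e)), vtx_mul_vtx, if_neg hl, zero_mul, mul_zero]
  · rw [mul_assoc, hge, edg_mul_vtx]
  · rw [hge, vtx_mul_gh]

/-- Two distinct nonzero edges `e, f` with the same range give the matrix units `e f^*, f e^*`. -/
lemma freePair_of_same_range (hK : ¬ IsAbsoluteField K) {e f : E} (he : edg K s r e ≠ 0)
    (hr : r e = r f) (hef : e ≠ f) : ∃ a b : (LeavittPathAlgebra K s r)ˣ, FreePair a b := by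
  have hee : gh K s r e * edg K s r e = vtx K s r (r e) := by rw [gh_mul_edg, if_pos rfl]
  have hff : gh K s r f * edg K s r f = vtx K s r (r f) := by rw [gh_mul_edg, if_pos rfl]
  have hef' : gh K s r e * edg K s r f = 0 := by rw [gh_mul_edg, if_neg hef]
  have hfe' : gh K s r f * edg K s r e = 0 := by rw [gh_mul_edg, if_neg (Ne.symm hef)]
  have hev : edg K s r e * vtx K s r (r f) = edg K s r e := by rw [← hr, edg_mul_vtx]
  have hfv : edg K s r f * vtx K s r (r e) = edg K s r f := by rw [hr, edg_mul_vtx]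
  refine exists_freePair_of_matrixUnits hK (edg K s r e * gh K s r f) (edg K s r f * gh K s r e)
    ?_ ?_ ?_ ?_ ?_
  · rw [mul_assoc, ← mul_assoc (gh K s r f), hfe', zero_mul, mul_zero]
  · rw [mul_assoc, ← mul_assoc (gh K s r e), hef', zero_mul, mul_zero]
  · rw [mul_assoc (edg K s r e), ← mul_assoc (gh K s r f), hff, ← mul_assoc (edg K s r e), hev,
      mul_assoc, ← mul_assoc (gh K s r e), hee, ← mul_assoc, edg_mul_vtx]
  · rw [mul_assoc (edg K s r f), ← mul_assoc (gh K s r e), hee, ← mul_assoc (edg K s r f), hfv,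
      mul_assoc, ← mul_assoc (gh K s r f), hff, ← mul_assoc, edg_mul_vtx]
  · intro h0
    apply he
    have : edg K s r e * gh K s r f * edg K s r f = edg K s r e := by
      rw [mul_assoc, hff, hev]
    rw [← this, h0, zero_mul]

/-- A loop `e` at `v` for which `p = v - e e^*` is nonzero gives the matrix units `e p, p e^*`. -/
lemma freePair_of_toeplitz (hK : ¬ IsAbsoluteField K) {e : E} (hl : s e = r e)
    (hp : edg K s r e * gh K s r e ≠ vtx K s r (s e)) :
    ∃ a b : (LeavittPathAlgebra K s r)ˣ, FreePair a b := by
  have hge : gh K s r e * edg K s r e = vtx K s r (s e) := by rw [gh_mul_edg, if_pos rfl, hl]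
  have hve := vtx_mul_edg K s r e
  have hev : edg K s r e * vtx K s r (s e) = edg K s r e := by rw [hl, edg_mul_vtx]
  have hvg : vtx K s r (s e) * gh K s r e = gh K s r e := by rw [hl, vtx_mul_gh]
  have hgv := gh_mul_vtx K s r e
  have hvv : vtx K s r (s e) * vtx K s r (s e) = vtx K s r (s e) := by
    rw [vtx_mul_vtx, if_pos rfl]
  generalize edg K s r e = x at *
  generalize gh K s r e = y at *
  generalize vtx K s r (s e) = v at *
  obtain ⟨p, hpdef⟩ : ∃ p, p = v - x * y := ⟨_, rfl⟩
  have hp0 : p ≠ 0 := by rw [hpdef, sub_ne_zero]; exact hp.symm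
  have hpx : p * x = 0 := by rw [hpdef, sub_mul, mul_assoc, hge, hve, hev, sub_self]
  have hyp : y * p = 0 := by rw [hpdef, mul_sub, ← mul_assoc, hge, hvg, hgv, sub_self]
  have hvp : v * p = p := by rw [hpdef, mul_sub, ← mul_assoc, hvv, hve]
  have hpp : p * p = p := by
    nth_rewrite 1 [hpdef]
    rw [sub_mul, mul_assoc, hyp, mul_zero, sub_zero, hvp]
  refine exists_freePair_of_matrixUnits hK (x * p) (p * y) ?_ ?_ ?_ ?_ ?_
  · rw [mul_assoc, ← mul_assoc p, hpx, zero_mul, mul_zero]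
  · rw [mul_assoc, ← mul_assoc y, hyp, zero_mul, mul_zero]
  · rw [mul_assoc x, ← mul_assoc p, hpp, mul_assoc x, mul_assoc p, ← mul_assoc y, hge, hvp, hpp]
  · rw [mul_assoc p, ← mul_assoc y, hge, hvp, hpp, ← mul_assoc, hpp]
  · intro h0
    apply hp0
    rw [← hvp, ← hge, mul_assoc, h0, mul_zero]

end units

end LPA

/-- the unit group of a non-commutative unital Leavitt path algebra over a
non-absolute field contains a non-cyclic free subgroup. -/
theorem stmt2 (K V E : Type*) [Field K] [Fintype V] (s r : E → V)
    (hK : ¬ IsAbsoluteField K)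
    (hnc : ∃ x y : LPA.LeavittPathAlgebra K s r, x * y ≠ y * x) :
    ∃ a b : (LPA.LeavittPathAlgebra K s r)ˣ, FreePair a b := by
  by_contra hno
  obtain ⟨x, y, hxy⟩ := hnc
  refine hxy (LPA.commute_of_gen K s r (LPA.commute_gen ?_ ?_ ?_) x y)
  · intro e he
    by_contra hl
    exact hno (LPA.freePair_of_nonloop hK he hl)
  · intro e f he _ hr
    by_contra hef
    exact hno (LPA.freePair_of_same_range hK he hr hef)
  · intro e hl
    by_contra hp
    exact hno (LPA.freePair_of_toeplitz hK hl hp)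
end
end

section
/- Let E be a directed graph with E^0 finite and K a non-absolute field. If the Cohn path algebra C_K(E) is non-commutative, then the unit group C_K(E)^× contains a non-cyclic free subgroup. -/
/-! A noncommutative Cohn path algebra has an edge `f`, since vertices are orthogonal idempotents
and so commute (`LPA.commute_of_isEmpty`). From `f` one builds `2 × 2` matrix units
(`LPA.exists_matrixUnits`): `r(f), f^*, f, f f^*` if `f` is not a loop, and
`p, p f^*, f p, f p f^*` with `p = s(f) - f f^*` if it is; here the absence of (CK2) matters. They
are nonzero because the algebra acts on functions on `List E × V` (`LPA.cohnRep`), with edges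
acting as shifts. Completing by the complementary idempotent embeds `GL₂(K)` in the unit group
(`exists_freePair_of_matrixUnits`).

It remains to find a free pair in `GL₂(K)`. Independently of the characteristic, a non-absolute
field has a valuation ring whose maximal ideal contains some `u ≠ 0` (`exists_valuation`), and
then two conjugate hyperbolic matrices built from `u` play ping-pong (`freePair_of_valuation`). -/

noncomputable section
open scoped Classical
universe u

/-! ### Free pairs in `GL₂` of a field -/

theorem FreePair.map {G H : Type*} [Group G] [Group H] (φ : G →* H)
    (hφ : Function.Injective φ) {a b : G} (h : FreePair a b) : FreePair (φ a) (φ b) := by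
  have : (FreeGroup.lift ![φ a, φ b] : FreeGroup (Fin 2) →* H)
      = φ.comp (FreeGroup.lift ![a, b]) := by
    ext i
    fin_cases i <;> simp
  unfold FreePair
  rw [this]
  exact hφ.comp h

open Pointwise in
/-- The ping-pong lemma for two generators. Mathlib's version forces the index type into the
universe of the group, so it is applied to `ULift (Fin 2)`. -/
theorem injective_lift_of_ping_pong_fin_two {G α : Type*} [Group G] [MulAction G α]
    (a : Fin 2 → G) (X Y : Fin 2 → Set α) (hXne : ∀ i, (X i).Nonempty)
    (hXX : Pairwise (Function.onFun Disjoint X)) (hYY : Pairwise (Function.onFun Disjoint Y))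
    (hXY : ∀ i j, Disjoint (X i) (Y j)) (hX : ∀ i, a i • (Y i)ᶜ ⊆ X i)
    (hY : ∀ i, a⁻¹ i • (X i)ᶜ ⊆ Y i) : Function.Injective (FreeGroup.lift a) := by
  have key := FreeGroup.injective_lift_of_ping_pong (fun i : ULift (Fin 2) => a i.down)
    (fun i => X i.down) (fun i => Y i.down) (fun i => hXne _)
    (fun i j hij => hXX fun h => hij (ULift.ext _ _ h))
    (fun i j hij => hYY fun h => hij (ULift.ext _ _ h))
    (fun i j => hXY _ _) (fun i => hX _) (fun i => hY _)
  have : FreeGroup.lift a = (FreeGroup.lift fun i : ULift (Fin 2) => a i.down).comp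
      (FreeGroup.freeGroupCongr Equiv.ulift.symm).toMonoidHom := by
    ext i
    simp
  rw [this]
  exact key.comp (FreeGroup.freeGroupCongr _).injective

open Matrix Pointwise in
/-- `GL₂(K)` contains a free group of rank two as soon as `K` carries a nontrivial valuation.
With `A = diag(1, u²)` and `g = !![1, u; 1, 1]`, the matrices `A` and `g A g⁻¹` play ping-pong
on the projective line: `A` is hyperbolic with fixed points `∞, 0`, and `g` moves the two discs
around these points into the annulus `v u ≤ v z < (v u)⁻¹`. Left multiplication of `GL₂(K)` on
itself replaces the projective line, the point being `z = h 0 0 / h 1 0`. -/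
theorem freePair_of_valuation {K Γ : Type*} [Field K] [LinearOrderedCommGroupWithZero Γ]
    (v : Valuation K Γ) (u : K) (hu0 : u ≠ 0) (hu : v u < 1) :
    ∃ a b : GL (Fin 2) K, FreePair a b := by
  have hvu : 0 < v u := by simpa [zero_lt_iff] using hu0
  have hu1 : 1 - u ≠ 0 := by
    intro h
    rw [← sub_eq_zero.mp h] at hu
    simp at hu
  let A : GL (Fin 2) K := GeneralLinearGroup.mkOfDetNeZero !![1, 0; 0, u ^ 2] (by simp [hu0])
  let g : GL (Fin 2) K := GeneralLinearGroup.mkOfDetNeZero !![1, u; 1, 1] (by simpa using hu1)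
  have hA0 (h : GL (Fin 2) K) : (A * h) 0 0 = h 0 0 := by
    simp [A, Matrix.mul_apply, GeneralLinearGroup.mkOfDetNeZero]
  have hA1 (h : GL (Fin 2) K) : (A * h) 1 0 = u ^ 2 * h 1 0 := by
    simp [A, Matrix.mul_apply, GeneralLinearGroup.mkOfDetNeZero]
  have hg0 (h : GL (Fin 2) K) : (g * h) 0 0 = h 0 0 + u * h 1 0 := by
    simp [g, Matrix.mul_apply, GeneralLinearGroup.mkOfDetNeZero]
  have hg1 (h : GL (Fin 2) K) : (g * h) 1 0 = h 0 0 + h 1 0 := by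
    simp [g, Matrix.mul_apply, GeneralLinearGroup.mkOfDetNeZero]
  have hne (h : GL (Fin 2) K) : h 0 0 ≠ 0 ∨ h 1 0 ≠ 0 := by
    by_contra! hc
    have := h.det_ne_zero
    rw [Matrix.det_fin_two] at this
    simp [hc.1, hc.2] at this
  -- The disc around `∞` and the disc around `0`.
  let X : Set (GL (Fin 2) K) := {h | v (h 1 0) ≤ v u * v (h 0 0)}
  let Y : Set (GL (Fin 2) K) := {h | v (h 0 0) < v u * v (h 1 0)}
  have key : ∀ x : Γ, v u * x ≤ x := fun x => mul_le_of_le_one_left' hu.le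
  have keylt : ∀ x : Γ, 0 < x → v u * x < x := fun x hx => by
    simpa using mul_lt_mul_of_pos_right hu hx
  have hXY : Disjoint X Y := by
    rw [Set.disjoint_left]
    intro h h1 h2
    simp only [X, Y, Set.mem_ofPred_eq] at h1 h2
    exact absurd (h2.trans_le ((key _).trans h1)) (by
      simpa using key _)
  have hAX : A • Yᶜ ⊆ X := by
    rintro _ ⟨h, hh, rfl⟩
    simp only [X, Y, Set.mem_ofPred_eq, Set.mem_compl_iff, not_lt, smul_eq_mul] at hh ⊢
    rw [hA0, hA1, map_mul, map_pow, pow_two, mul_assoc]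
    gcongr
  have hAY : A⁻¹ • Xᶜ ⊆ Y := by
    rintro _ ⟨h, hh, rfl⟩
    obtain ⟨h, rfl⟩ : ∃ k, h = A * k := ⟨A⁻¹ * h, by simp⟩
    simp only [X, Y, Set.mem_ofPred_eq, Set.mem_compl_iff, not_le, smul_eq_mul,
      inv_mul_cancel_left] at hh ⊢
    rw [hA0, hA1, map_mul, map_pow, pow_two, mul_assoc] at hh
    exact lt_of_mul_lt_mul_left' hh
  -- `g` moves both ping-pong sets into the complementary annulus.
  have hg : ∀ h, h ∈ X ∪ Y → g * h ∉ X ∪ Y := by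
    intro h hh
    simp only [X, Y, Set.mem_union, Set.mem_ofPred_eq, not_or, not_le, not_lt] at hh ⊢
    rw [hg0, hg1]
    rcases hh with hh | hh
    · have hx : 0 < v (h 0 0) := by
        rw [zero_lt_iff, ne_eq, map_eq_zero]
        intro h0
        rw [h0] at hh
        simp at hh
        exact (hne h).elim (· h0) (· hh)
      have e1 : v (h 0 0 + h 1 0) = v (h 0 0) :=
        v.map_add_eq_of_lt_left (hh.trans_lt (keylt _ hx))
      have e2 : v (h 0 0 + u * h 1 0) = v (h 0 0) := by
        apply v.map_add_eq_of_lt_left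
        rw [map_mul]
        exact (key _).trans_lt (hh.trans_lt (keylt _ hx))
      rw [e1, e2]
      exact ⟨keylt _ hx, key _⟩
    · have hy : 0 < v (h 1 0) := by
        rw [zero_lt_iff]
        intro h0
        simp [h0] at hh
      have e1 : v (h 0 0 + h 1 0) = v (h 1 0) :=
        v.map_add_eq_of_lt_right (hh.trans (keylt _ hy))
      have e2 : v (h 0 0 + u * h 1 0) = v u * v (h 1 0) := by
        rw [v.map_add_eq_of_lt_right (by rwa [map_mul]), map_mul]
      rw [e1, e2]
      exact ⟨(key _).trans_lt (keylt _ hy), le_rfl⟩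
  have hdis : ∀ S T : Set (GL (Fin 2) K), S ⊆ X ∪ Y → T ⊆ X ∪ Y → Disjoint S (g • T) := by
    intro S T hS hT
    rw [Set.disjoint_right]
    rintro _ ⟨h, hh, rfl⟩ h2
    exact hg h (hT hh) (hS h2)
  have hXs : X ⊆ X ∪ Y := Set.subset_union_left
  have hYs : Y ⊆ X ∪ Y := Set.subset_union_right
  have h1X : A * g⁻¹ * g ∈ X := by
    simp only [X, Set.mem_ofPred_eq]
    have h1 := hA1 1
    have h0 := hA0 1
    simp only [mul_one] at h0 h1
    simp [h0, h1]
  refine ⟨A, g * A * g⁻¹, ?_⟩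
  refine injective_lift_of_ping_pong_fin_two ![A, g * A * g⁻¹] ![X, g • X] ![Y, g • Y]
    ?_ ?_ ?_ ?_ ?_ ?_
  · intro i
    fin_cases i
    · exact ⟨_, h1X⟩
    · exact Set.Nonempty.smul_set ⟨_, h1X⟩
  · intro i j hij
    fin_cases i <;> fin_cases j <;> simp [Function.onFun] at hij ⊢
    · exact hdis _ _ hXs hXs
    · exact (hdis _ _ hXs hXs).symm
  · intro i j hij
    fin_cases i <;> fin_cases j <;> simp [Function.onFun] at hij ⊢
    · exact hdis _ _ hYs hYs
    · exact (hdis _ _ hYs hYs).symm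
  · intro i j
    fin_cases i <;> fin_cases j <;> simp
    · exact hXY
    · exact hdis _ _ hXs hYs
    · exact (hdis _ _ hYs hXs).symm
    · exact hXY
  · intro i
    fin_cases i
    · exact hAX
    · change (g * A * g⁻¹) • (g • Y)ᶜ ⊆ g • X
      rw [← Set.smul_set_compl, smul_smul, inv_mul_cancel_right, mul_smul]
      exact Set.smul_set_mono hAX
  · intro i
    fin_cases i
    · exact hAY
    · change (g * A * g⁻¹)⁻¹ • (g • X)ᶜ ⊆ g • Y
      rw [← Set.smul_set_compl, smul_smul, show (g * A * g⁻¹)⁻¹ * g = g * A⁻¹ by group, mul_smul]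
      exact Set.smul_set_mono hAY

/-- A non-unit of a subring of a field lies in the maximal ideal of some valuation ring. -/
theorem exists_valuation_of_subring {K : Type*} [Field K] (A : Subring K) (u : A)
    (hu : ¬ ∃ w : A, w * u = 1) : ∃ B : ValuationSubring K, B.valuation (u : K) < 1 := by
  have hI : Ideal.span {u} ≠ ⊤ := by
    rw [Ideal.ne_top_iff_one, Ideal.mem_span_singleton']
    exact hu
  obtain ⟨B, -, hB⟩ := Ideal.image_subset_nonunits_valuationSubring _ hI
  exact ⟨B, B.mem_nonunits_iff.mp (hB ⟨u, Ideal.mem_span_singleton_self u, rfl⟩)⟩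

/-- A non-absolute field carries a nontrivial valuation: it extends the `2`-adic valuation of `ℤ`
in characteristic zero, and the `t`-adic one of `𝔽_p[t]`, with `t` transcendental, in
characteristic `p`. -/
theorem exists_valuation {K : Type*} [Field K] (hK : ¬ IsAbsoluteField K) :
    ∃ (B : ValuationSubring K) (u : K), u ≠ 0 ∧ B.valuation u < 1 := by
  obtain ⟨p, hp⟩ := CharP.exists K
  rcases CharP.char_is_prime_or_zero K p with hpp | rfl
  · have : Fact p.Prime := ⟨hpp⟩
    let _ := ZMod.algebra K p
    -- If all elements were algebraic, finitely many would generate a finite extension of `𝔽_p`.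
    obtain ⟨t, ht⟩ : ∃ t : K, Transcendental (ZMod p) t := by
      by_contra! hc
      apply hK
      intro S
      have hfd : FiniteDimensional (ZMod p) (IntermediateField.adjoin (ZMod p) (S : Set K)) :=
        IntermediateField.finiteDimensional_adjoin fun x _ =>
          (not_not.mp (hc x)).isIntegral
      have : Finite (IntermediateField.adjoin (ZMod p) (S : Set K)) :=
        Module.finite_of_finite (ZMod p)
      refine Set.Finite.subset (Set.toFinite
        ((IntermediateField.adjoin (ZMod p) (S : Set K) : Set K))) ?_
      have : Subfield.closure (S : Set K)
          ≤ (IntermediateField.adjoin (ZMod p) (S : Set K)).toSubfield :=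
        Subfield.closure_le.mpr (IntermediateField.subset_adjoin _ _)
      exact this
    obtain ⟨B, hB⟩ := exists_valuation_of_subring (Algebra.adjoin (ZMod p) {t}).toSubring
      ⟨t, Algebra.self_mem_adjoin_singleton _ t⟩ (by
        rintro ⟨⟨w, hw⟩, h⟩
        have h' : w * t = 1 := congrArg Subtype.val h
        have hw' : w ∈ Algebra.adjoin (ZMod p) {t} := hw
        rw [Algebra.adjoin_singleton_eq_range_aeval] at hw'
        obtain ⟨q, rfl⟩ := hw'
        have hq : Polynomial.aeval t (q * Polynomial.X - 1) = 0 := by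
          simpa [sub_eq_zero] using h'
        have := (transcendental_iff.mp ht) _ hq
        simpa using congrArg (Polynomial.eval 0) this)
    exact ⟨B, t, fun h => ht (h ▸ isAlgebraic_zero), hB⟩
  · have := CharP.charP_to_charZero K
    obtain ⟨B, hB⟩ := exists_valuation_of_subring (Int.castRingHom K).range
      ⟨2, 2, by simp⟩ (by
        rintro ⟨⟨w, n, rfl⟩, h⟩
        have h' : (n : K) * 2 = 1 := congrArg Subtype.val h
        have : n * 2 = 1 := by exact_mod_cast h'
        omega)
    exact ⟨B, 2, two_ne_zero, hB⟩

/-! ### Matrix units and `GL₂` -/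

/-- A unital ring containing a nonzero (possibly non-unital) copy of `M₂(K)`, with `e i j` the
matrix units, has a unit group containing a copy of `GL₂(K)`: complete a matrix by the
idempotent complementary to `e 0 0 + e 1 1`. -/
theorem exists_freePair_of_matrixUnits_s4 {K A : Type*} [Field K] [Ring A] [Algebra K A]
    (e : Fin 2 → Fin 2 → A)
    (he : ∀ i j k l, e i j * e k l = if j = k then e i l else 0) (h0 : e 0 0 ≠ 0)
    (hGL : ∃ a b : GL (Fin 2) K, FreePair a b) : ∃ a b : Aˣ, FreePair a b := by
  let φ : Matrix (Fin 2) (Fin 2) K →* A :=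
    { toFun := fun M => 1 - (e 0 0 + e 1 1)
        + (M 0 0 • e 0 0 + M 0 1 • e 0 1 + M 1 0 • e 1 0 + M 1 1 • e 1 1)
      map_one' := by simp
      map_mul' := by
        intro M N
        simp only [Matrix.mul_apply, Fin.sum_univ_two, mul_add, add_mul, sub_mul, mul_sub, mul_one,
          one_mul, smul_mul_assoc, mul_smul_comm, he, add_smul]
        simp
        module }
  -- Compressing by `e 0 i` and `e j 0` isolates the entry at `(i, j)` as a multiple of `e 0 0`.
  have hφ : Function.Injective φ := by
    intro M N h
    have h' : ∀ i j, e 0 i * φ M * e j 0 = e 0 i * φ N * e j 0 := fun i j => by rw [h]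
    ext i j
    have := h' i j
    simp only [φ, MonoidHom.coe_mk, OneHom.coe_mk] at this
    fin_cases i <;> fin_cases j <;>
      simpa [mul_add, add_mul, mul_sub, sub_mul, he, h0, smul_left_inj] using this
  obtain ⟨a, b, hab⟩ := hGL
  exact ⟨_, _, hab.map (Units.map φ) (Units.map_injective hφ)⟩

/-! ### The Cohn path algebra -/

namespace LPA

section cohn

variable (K : Type*) [Field K] {V E : Type*} (s r : E → V)

/-- The image of a vertex in the Cohn path algebra. -/
def cv (v : V) : CohnPathAlgebra K s r :=
  RingQuot.mkAlgHom K (CohnRel K s r) (FreeAlgebra.ι K (Gen.vertex v))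

/-- The image of an edge in the Cohn path algebra. -/
def ce (e : E) : CohnPathAlgebra K s r :=
  RingQuot.mkAlgHom K (CohnRel K s r) (FreeAlgebra.ι K (Gen.edge e))

/-- The image of a ghost edge in the Cohn path algebra. -/
def cg (e : E) : CohnPathAlgebra K s r :=
  RingQuot.mkAlgHom K (CohnRel K s r) (FreeAlgebra.ι K (Gen.ghost e))

theorem cv_mul_cv (v w : V) : cv K s r v * cv K s r w = if v = w then cv K s r v else 0 := by
  have := RingQuot.mkAlgHom_rel K (CohnRel.vtx_mul (K := K) (s := s) (r := r) v w)
  split_ifs at this ⊢ <;> simpa [cv] using this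

theorem cv_mul_ce (e : E) : cv K s r (s e) * ce K s r e = ce K s r e := by
  simpa [cv, ce] using RingQuot.mkAlgHom_rel K (CohnRel.edge_src (K := K) (s := s) (r := r) e)

theorem ce_mul_cv (e : E) : ce K s r e * cv K s r (r e) = ce K s r e := by
  simpa [cv, ce] using RingQuot.mkAlgHom_rel K (CohnRel.edge_rng (K := K) (s := s) (r := r) e)

theorem cv_mul_cg (e : E) : cv K s r (r e) * cg K s r e = cg K s r e := by
  simpa [cv, cg] using RingQuot.mkAlgHom_rel K (CohnRel.ghost_rng (K := K) (s := s) (r := r) e)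

theorem cg_mul_cv (e : E) : cg K s r e * cv K s r (s e) = cg K s r e := by
  simpa [cv, cg] using RingQuot.mkAlgHom_rel K (CohnRel.ghost_src (K := K) (s := s) (r := r) e)

theorem cg_mul_ce (e : E) : cg K s r e * ce K s r e = cv K s r (r e) := by
  simpa [cv, ce, cg] using RingQuot.mkAlgHom_rel K (CohnRel.ck1 (K := K) (s := s) (r := r) e e)

/-- The initial vertex of `(l, v) : List E × V`, read as the edges of `l` followed in
turn, ending at `v`. Consecutive edges are not required to be composable. -/
def start : List E × V → V
  | ([], v) => v
  | (e :: _, _) => s e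

/-- The operators through which the generators of the Cohn path algebra act on functions on
`List E × V`, written so that on the indicator function of a pair they read: a vertex keeps the
pairs starting there, an edge prepends itself to the pairs starting at its range, and a ghost edge
removes itself from the pairs whose tail starts at its range; every other pair is sent to zero. -/
def genAct : Gen V E → Module.End K (List E × V → K)
  | .vertex v =>
    { toFun := fun φ x => if start s x = v then φ x else 0
      map_add' := by intros; ext; simp; split_ifs <;> simp
      map_smul' := by intros; ext; simp }
  | .edge f =>
    { toFun := fun φ x => match x with
        | ([], _) => 0
        | (e :: l, w) => if e = f ∧ start s (l, w) = r f then φ (l, w) else 0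
      map_add' := by
        intros; ext ⟨_ | _, _⟩ <;> simp; split_ifs <;> simp
      map_smul' := by intros; ext ⟨_ | _, _⟩ <;> simp }
  | .ghost f =>
    { toFun := fun φ x => if start s x = r f then φ (f :: x.1, x.2) else 0
      map_add' := by intros; ext; simp; split_ifs <;> simp
      map_smul' := by intros; ext; simp }

theorem genAct_vertex (v : V) (φ : List E × V → K) (x : List E × V) :
    genAct K s r (.vertex v) φ x = if start s x = v then φ x else 0 := rfl

theorem genAct_edge_nil (f : E) (φ : List E × V → K) (w : V) :
    genAct K s r (.edge f) φ ([], w) = 0 := rfl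

theorem genAct_edge_cons (f e : E) (φ : List E × V → K) (l : List E) (w : V) :
    genAct K s r (.edge f) φ (e :: l, w)
      = if e = f ∧ start s (l, w) = r f then φ (l, w) else 0 := rfl

theorem genAct_ghost (f : E) (φ : List E × V → K) (x : List E × V) :
    genAct K s r (.ghost f) φ x = if start s x = r f then φ (f :: x.1, x.2) else 0 := rfl

/-- The operators `genAct` satisfy (V), (E1), (E2), (CK1) and sum to `1` over the vertices. -/
theorem genAct_rel {a b : FreeAlgebra K (Gen V E)} (h : CohnRel K s r a b) :
    FreeAlgebra.lift K (genAct K s r) a = FreeAlgebra.lift K (genAct K s r) b := by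
  induction h with
  | vtx_mul v w =>
    ext φ x
    by_cases hvw : v = w
    · subst hvw
      simp only [if_true, map_mul, FreeAlgebra.lift_ι_apply, Module.End.mul_apply, genAct_vertex]
      grind
    · simp only [map_mul, FreeAlgebra.lift_ι_apply, Module.End.mul_apply, genAct_vertex,
        if_neg hvw, map_zero, LinearMap.zero_apply, Pi.zero_apply]
      split_ifs with h1 h2
      · exact absurd (h1.symm.trans h2) hvw
      · rfl
      · rfl
  | edge_src e =>
    ext φ ⟨_ | ⟨f, l⟩, w⟩
    · simp [genAct_vertex, genAct_edge_nil]
    · simp only [map_mul, FreeAlgebra.lift_ι_apply, Module.End.mul_apply, genAct_vertex,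
        genAct_edge_cons, start]
      grind
  | edge_rng e =>
    ext φ ⟨_ | ⟨f, l⟩, w⟩
    · simp [genAct_edge_nil]
    · simp only [map_mul, FreeAlgebra.lift_ι_apply, Module.End.mul_apply, genAct_vertex,
        genAct_edge_cons]
      grind
  | ghost_rng e =>
    ext φ x
    simp only [map_mul, FreeAlgebra.lift_ι_apply, Module.End.mul_apply, genAct_vertex,
      genAct_ghost]
    grind
  | ghost_src e =>
    ext φ x
    have hs : start s (e :: x.1, x.2) = s e := rfl
    simp only [map_mul, FreeAlgebra.lift_ι_apply, Module.End.mul_apply, genAct_vertex,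
      genAct_ghost, hs, if_true]
  | ck1 e f =>
    ext φ ⟨l, w⟩
    by_cases hef : e = f
    · subst hef
      simp only [if_true, map_mul, FreeAlgebra.lift_ι_apply, Module.End.mul_apply, genAct_vertex,
        genAct_ghost, genAct_edge_cons]
      grind
    · simp [genAct_ghost, genAct_edge_cons, hef]
  | unit =>
    ext φ x
    simp [genAct_vertex, LinearMap.sum_apply, Finset.sum_apply]

/-- The representation of the Cohn path algebra on functions on `List E × V`. -/
def cohnRep : CohnPathAlgebra K s r →ₐ[K] Module.End K (List E × V → K) :=
  RingQuot.liftAlgHom K ⟨FreeAlgebra.lift K (genAct K s r), fun _ _ h => genAct_rel K s r h⟩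

theorem cohnRep_cv (v : V) : cohnRep K s r (cv K s r v) = genAct K s r (.vertex v) := by
  simp [cohnRep, cv]

theorem cohnRep_ce (e : E) : cohnRep K s r (ce K s r e) = genAct K s r (.edge e) := by
  simp [cohnRep, ce]

theorem cohnRep_cg (e : E) : cohnRep K s r (cg K s r e) = genAct K s r (.ghost e) := by
  simp [cohnRep, cg]

/-- A vertex `v` fixes functions at the trivial path `([], v)`. -/
theorem cv_ne_zero (v : V) : cv K s r v ≠ 0 := by
  intro h
  have := congrArg (fun a => cohnRep K s r a (fun _ => 1) ([], v)) h
  simp [cohnRep_cv, genAct_vertex, start] at this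

/-- The relation (CK2) fails in the Cohn path algebra: in `cohnRep`, the values of
`e e^*` vanish at the trivial path `([], s e)`, where `s e` acts as the identity. -/
theorem cv_sub_ne_zero (e : E) : cv K s r (s e) - ce K s r e * cg K s r e ≠ 0 := by
  intro h
  have := congrArg (fun a => cohnRep K s r a (fun _ => 1) ([], s e)) h
  simp [cohnRep_cv, cohnRep_ce, cohnRep_cg, genAct_vertex, genAct_edge_nil, start] at this

/-- Each edge `f` yields nonzero `2 × 2` matrix units. If `f` is not a loop they are
`r(f), f^*, f, f f^*`; if it is a loop they are `p, p f^*, f p, f p f^*` with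
`p = s(f) - f f^*`. -/
theorem exists_matrixUnits (f : E) : ∃ e : Fin 2 → Fin 2 → CohnPathAlgebra K s r,
    (∀ i j k l, e i j * e k l = if j = k then e i l else 0) ∧ e 0 0 ≠ 0 := by
  suffices h : ∃ p x y : CohnPathAlgebra K s r, p ≠ 0 ∧ p * p = p ∧ x * p = x ∧ p * y = y ∧
      p * x = 0 ∧ y * p = 0 ∧ y * x = p by
    obtain ⟨p, x, y, h0, hpp, hxp, hpy, hpx, hyp, hyx⟩ := h
    have hxx : x * x = 0 := by rw [← hxp, mul_assoc x, ← mul_assoc p, hpx]; simp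
    have hyy : y * y = 0 := by rw [← hpy, mul_assoc p, ← mul_assoc y, hyp]; simp
    have hpx' : ∀ z, p * (x * z) = 0 := fun z => by rw [← mul_assoc, hpx, zero_mul]
    have hxx' : ∀ z, x * (x * z) = 0 := fun z => by rw [← mul_assoc, hxx, zero_mul]
    have hyx' : ∀ z, y * (x * z) = p * z := fun z => by rw [← mul_assoc, hyx]
    refine ⟨![![p, y], ![x, x * y]], ?_, h0⟩
    intro i j k l
    fin_cases i <;> fin_cases j <;> fin_cases k <;> fin_cases l <;>
      simp [mul_assoc, hpp, hxp, hpy, hpx, hyp, hyx, hxx, hyy, hpx', hxx', hyx']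
  have h1 := cv_mul_ce K s r f
  have h2 := ce_mul_cv K s r f
  have h3 := cv_mul_cg K s r f
  have h4 := cg_mul_cv K s r f
  have h5 := cg_mul_ce K s r f
  by_cases hf : r f = s f
  · have h0 := cv_sub_ne_zero K s r f
    have h6 := (cv_mul_cv K s r (s f) (s f)).trans (if_pos rfl)
    rw [hf] at h2 h3 h5
    generalize cv K s r (s f) = v at *
    generalize ce K s r f = a at *
    generalize cg K s r f = b at *
    obtain ⟨p, hp⟩ : ∃ p, p = v - a * b := ⟨_, rfl⟩
    rw [← hp] at h0
    have hbp : b * p = 0 := by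
      rw [hp, mul_sub, ← mul_assoc, h5, h3, h4, sub_self]
    have hpa : p * a = 0 := by
      rw [hp, sub_mul, mul_assoc, h5, h1, h2, sub_self]
    have hvp : v * p = p := by rw [hp, mul_sub, ← mul_assoc, h6, h1]
    have hpp : p * p = p := by
      nth_rw 1 [hp]
      rw [sub_mul, mul_assoc, hbp, mul_zero, sub_zero, hvp]
    refine ⟨p, a * p, p * b, h0, hpp, ?_, ?_, ?_, ?_, ?_⟩
    · rw [mul_assoc, hpp]
    · rw [← mul_assoc, hpp]
    · rw [← mul_assoc, hpa, zero_mul]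
    · rw [mul_assoc, hbp, mul_zero]
    · rw [mul_assoc, ← mul_assoc b, h5, hvp, hpp]
  · have h6 := (cv_mul_cv K s r (r f) (r f)).trans (if_pos rfl)
    have h7 := (cv_mul_cv K s r (r f) (s f)).trans (if_neg hf)
    have h8 := (cv_mul_cv K s r (s f) (r f)).trans (if_neg (Ne.symm hf))
    refine ⟨cv K s r (r f), ce K s r f, cg K s r f, cv_ne_zero K s r (r f), h6, h2, h3, ?_, ?_, h5⟩
    · rw [← h1, ← mul_assoc, h7, zero_mul]
    · rw [← h4, mul_assoc, h8, mul_zero]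

/-- Without edges the algebra is generated by the vertices, which are orthogonal idempotents. -/
theorem commute_of_isEmpty [IsEmpty E] (x y : CohnPathAlgebra K s r) : x * y = y * x := by
  have hv : ∀ v w : V, Commute (cv K s r v) (cv K s r w) := fun v w => by
    unfold Commute SemiconjBy
    rw [cv_mul_cv, cv_mul_cv]
    grind
  obtain ⟨x, rfl⟩ := RingQuot.mkAlgHom_surjective K (CohnRel K s r) x
  obtain ⟨y, rfl⟩ := RingQuot.mkAlgHom_surjective K (CohnRel K s r) y
  have step : ∀ (z : CohnPathAlgebra K s r), (∀ v, Commute (cv K s r v) z) →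
      ∀ x, Commute (RingQuot.mkAlgHom K (CohnRel K s r) x) z := by
    intro z hz x
    induction x with
    | grade0 c => rw [AlgHom.commutes]; exact Algebra.commutes c z
    | grade1 g =>
      rcases g with v | e | e
      · exact hz v
      · exact isEmptyElim e
      · exact isEmptyElim e
    | mul a b ha hb => rw [map_mul]; exact ha.mul_left hb
    | add a b ha hb => rw [map_add]; exact ha.add_left hb
  exact step _ (fun v => (step _ (fun w => hv w v) y).symm) x

end cohn

end LPA

/-- the unit group of a non-commutative unital Cohn path algebra over a
non-absolute field contains a non-cyclic free subgroup. -/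
theorem stmt4 (K V E : Type*) [Field K] [Fintype V] (s r : E → V)
    (hK : ¬ IsAbsoluteField K)
    (hnc : ∃ x y : LPA.CohnPathAlgebra K s r, x * y ≠ y * x) :
    ∃ a b : (LPA.CohnPathAlgebra K s r)ˣ, FreePair a b := by
  obtain ⟨x, y, hxy⟩ := hnc
  obtain ⟨f⟩ : Nonempty E := by
    by_contra h
    rw [not_nonempty_iff] at h
    exact hxy (LPA.commute_of_isEmpty K s r x y)
  obtain ⟨B, u, hu0, hu⟩ := exists_valuation hK
  obtain ⟨e, he, h0⟩ := LPA.exists_matrixUnits K s r f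
  exact exists_freePair_of_matrixUnits_s4 e he h0 (freePair_of_valuation B.valuation u hu0 hu)
end
end
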